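/- For nonnegative integers $b, k$ and $n\ge 2$ with $nb \ge 2$, the constant term $\mathrm{CT}_x\, x_1^2 (x_1+\cdots+x_n)^{nb-2}\prod_{l=1}^n x_l^{-b}\prod_{1\le i\ne j\le n}(1-x_i/x_j)^{k}$ equals $-b(nk-k-b+1)(nb-2)!\prod_{l=0}^{n-1}\frac{(k(l+1))!}{(b+kl)!\,k!}$. -/

import Mathlib

open MvPolynomial Finset

/-!
The functional `umbralEval B : f ↦ (f(∂) ∏_i x_i^B)|_{x = 1}` computes, up to factorials, the
coefficient of `∏_i x_i^B` in `f * (∑_i x_i)^N` for homogeneous `f`, which removes the power of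
`x_1 + ⋯ + x_n` from the constant term. It obeys the integration by parts rule
`L(x_i f) = B L(f) - L(x_i ∂_i f)` and is symmetric in the variables. Applied to
`f = h ∏_{i ≠ j} (x_i - x_j)^k`, with the terms `2k / (x_i - x_j)` of the logarithmic derivative
antisymmetrised under `x_i ↔ x_j`, this is the umbral analogue of Aomoto's proof of the Selberg
integral: it yields the value at `x_i ^ 2` in terms of the value at `x_i`, and the factor gained
when a further variable is multiplied in. Multiplying in all variables raises `B` by one, so
everything reduces to `b = 0`, which is Dyson's constant term identity, proved here by Good's
recursion.
-/

namespace Morris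

section Multinomial

variable {σ : Type*} [DecidableEq σ] {s : Finset σ} {a : σ → ℕ} {i : σ}

theorem sub_single_add_single (ha : a i ≠ 0) : a - Pi.single i 1 + Pi.single i 1 = a := by
  refine tsub_add_cancel_of_le fun j ↦ ?_
  obtain rfl | hj := eq_or_ne j i
  · simpa using Nat.one_le_iff_ne_zero.2 ha
  · simp [hj]

theorem sum_add_single (hi : i ∈ s) (a : σ → ℕ) :
    ∑ j ∈ s, (a + Pi.single i 1 : σ → ℕ) j = ∑ j ∈ s, a j + 1 := by
  simp only [Pi.add_apply, sum_add_distrib, sum_pi_single', hi, if_true]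

theorem prod_factorial_add_single (hi : i ∈ s) (a : σ → ℕ) :
    ∏ j ∈ s, ((a + Pi.single i 1 : σ → ℕ) j).factorial
      = (∏ j ∈ s, (a j).factorial) * (a i + 1) := by
  have hne : ∀ j ∈ s.erase i, ((a + Pi.single i 1 : σ → ℕ) j).factorial = (a j).factorial :=
    fun j hj ↦ by rw [Pi.add_apply, Pi.single_eq_of_ne (ne_of_mem_erase hj), add_zero]
  rw [← mul_prod_erase s _ hi, ← mul_prod_erase s (fun j ↦ (a j).factorial) hi, prod_congr rfl hne,
    Pi.add_apply, Pi.single_eq_same, Nat.factorial_succ]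
  ring

theorem succ_mul_multinomial_add_single (hi : i ∈ s) (a : σ → ℕ) :
    (a i + 1) * Nat.multinomial s (a + Pi.single i 1) =
      (∑ j ∈ s, a j + 1) * Nat.multinomial s a := by
  refine Nat.eq_of_mul_eq_mul_left (prod_pos fun j _ ↦ (a j).factorial_pos : 0 < ∏ j ∈ s, _) ?_
  rw [← mul_assoc, ← prod_factorial_add_single hi, Nat.multinomial_spec, sum_add_single hi,
    Nat.factorial_succ, mul_left_comm, Nat.multinomial_spec]

theorem multinomial_eq_sum_sub_single (hs : s.Nonempty) (ha : ∀ i ∈ s, a i ≠ 0) :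
    Nat.multinomial s a = ∑ i ∈ s, Nat.multinomial s (a - Pi.single i 1) := by
  have hpos : 0 < ∑ i ∈ s, a i := sum_pos (fun i hi ↦ Nat.pos_of_ne_zero (ha i hi)) hs
  refine Nat.eq_of_mul_eq_mul_left hpos ?_
  rw [sum_mul, mul_sum]
  refine sum_congr rfl fun i hi ↦ ?_
  have h := succ_mul_multinomial_add_single hi (a - Pi.single i 1)
  rwa [← sum_add_single hi, sub_single_add_single (ha i hi), Pi.sub_apply, Pi.single_eq_same,
    Nat.sub_add_cancel (Nat.one_le_iff_ne_zero.2 (ha i hi))] at h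

end Multinomial

section LeadingCoefficient

variable {σ R : Type*} [CommRing R] {p : MvPolynomial σ R} {m : σ →₀ ℕ} {i : σ}

theorem coeff_add_single_mul_X_sub_X {j : σ} (hij : j ≠ i) (hp : p.degreeOf i ≤ m i) :
    coeff (m + Finsupp.single i 1) (p * (X i - X j)) = coeff m p := by
  classical
  rw [mul_sub, coeff_sub, coeff_mul_X, coeff_mul_X', sub_eq_self, ite_eq_right_iff]
  intro _
  refine notMem_support_iff.1 (notMem_support_of_degreeOf_lt i ?_)
  simpa [hij] using Nat.lt_succ_of_le hp

theorem coeff_add_single_mul_prod_X_sub_X {ι : Type*} (t : Finset ι) {f : ι → σ}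
    (hf : ∀ l ∈ t, f l ≠ i) (hp : p.degreeOf i ≤ m i) :
    coeff (m + Finsupp.single i #t) (p * ∏ l ∈ t, (X i - X (f l))) = coeff m p := by
  nontriviality R
  induction t using Finset.cons_induction generalizing p m with
  | empty => simp
  | cons l t hl ih =>
    rw [forall_mem_cons] at hf
    have hdeg : (X i - X (f l) : MvPolynomial σ R).degreeOf i ≤ 1 := by
      simpa [degreeOf_X_of_ne hf.1.symm] using degreeOf_sub_le i (X i : MvPolynomial σ R) (X (f l))
    rw [prod_cons, ← mul_assoc, card_cons, add_comm #t, Finsupp.single_add, ← add_assoc, ih hf.2,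
      coeff_add_single_mul_X_sub_X hf.1 hp]
    simpa using (degreeOf_mul_le i p _).trans (add_le_add hp hdeg)

theorem coeff_add_single_mul_prod_X_sub_X_pow {t : Finset σ} (hi : i ∉ t) (a : σ → ℕ)
    (hp : p.degreeOf i ≤ m i) :
    coeff (m + Finsupp.single i (∑ j ∈ t, a j)) (p * ∏ j ∈ t, (X i - X j) ^ a j) = coeff m p := by
  have h := coeff_add_single_mul_prod_X_sub_X (t.sigma fun j ↦ range (a j)) (f := Sigma.fst)
    (fun l hl ↦ ne_of_mem_of_not_mem (mem_sigma.1 hl).1 hi) hp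
  simpa only [prod_sigma, prod_const, card_sigma, card_range] using h

end LeadingCoefficient

section Dyson

variable {σ : Type*} [DecidableEq σ]

/-- The polynomial `∏_{i ≠ j} (x_j - x_i)^{a_i}` in the variables in `s`; its coefficient at
`dysonExponent s a` is the Dyson constant term `CT ∏_{i ≠ j} (1 - x_i / x_j)^{a_i}`. -/
noncomputable def dysonProd (R : Type*) [CommRing R] (s : Finset σ) (a : σ → ℕ) :
    MvPolynomial σ R :=
  ∏ i ∈ s, (∏ j ∈ s.erase i, (X j - X i)) ^ a i

/-- The exponent of the common denominator `∏_j x_j^{∑_{i ≠ j} a_i}` in the Dyson constant term. -/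
noncomputable def dysonExponent (s : Finset σ) (a : σ → ℕ) : σ →₀ ℕ :=
  ∑ j ∈ s, Finsupp.single j (∑ i ∈ s.erase j, a i)

variable {s : Finset σ} {a : σ → ℕ} {i : σ}

theorem dysonExponent_add_single (hi : i ∈ s) (a : σ → ℕ) :
    dysonExponent s (a + Pi.single i 1)
      = ∑ j ∈ s.erase i, Finsupp.single j 1 + dysonExponent s a := by
  simp only [dysonExponent, Pi.add_apply, sum_add_distrib, Finsupp.single_add]
  rw [add_comm, ← add_sum_erase s _ hi, sum_pi_single', if_neg (notMem_erase i s),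
    Finsupp.single_zero, zero_add]
  congr 1
  refine sum_congr rfl fun j hj ↦ ?_
  rw [sum_pi_single', if_pos (mem_erase.2 ⟨(ne_of_mem_erase hj).symm, hi⟩)]

theorem dysonExponent_of_eq_zero (hi : i ∈ s) (ha : a i = 0) :
    dysonExponent s a
      = dysonExponent (s.erase i) a + Finsupp.single i (∑ j ∈ s.erase i, a j) := by
  rw [dysonExponent, dysonExponent, ← sum_erase_add s _ hi]
  congr 1
  refine sum_congr rfl fun j _ ↦ ?_
  rw [erase_right_comm, sum_erase _ ha]

theorem dysonExponent_univ_const [Fintype σ] (k : ℕ) :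
    dysonExponent univ (fun _ : σ ↦ k)
      = Finsupp.equivFunOnFinite.symm fun _ ↦ (Fintype.card σ - 1) * k := by
  ext j
  simp [dysonExponent, Finsupp.finsetSum_apply, Finsupp.single_apply]

theorem sum_prod_div_sub_eq_one {K : Type*} [Field K] (hs : s.Nonempty) {v : σ → K}
    (hv : Set.InjOn v s) : ∑ i ∈ s, ∏ j ∈ s.erase i, v j / (v j - v i) = 1 := by
  have h := congrArg (Polynomial.eval 0) (Lagrange.sum_basis hv hs)
  rw [Polynomial.eval_finsetSum, Polynomial.eval_one] at h
  rw [← h]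
  refine sum_congr rfl fun i _ ↦ ?_
  rw [Lagrange.basis, Polynomial.eval_prod]
  refine prod_congr rfl fun j _ ↦ ?_
  simp only [Lagrange.basisDivisor, Polynomial.eval_mul, Polynomial.eval_C, Polynomial.eval_sub,
    Polynomial.eval_X, zero_sub, ← neg_sub (v j) (v i), inv_neg, neg_mul_neg, div_eq_inv_mul]

variable {R : Type*} [CommRing R]

theorem coeff_dysonExponent_add_single_prod_X_mul (hi : i ∈ s) (a : σ → ℕ)
    (p : MvPolynomial σ R) :
    coeff (dysonExponent s (a + Pi.single i 1)) ((∏ j ∈ s.erase i, X j) * p)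
      = coeff (dysonExponent s a) p := by
  have hX : (∏ j ∈ s.erase i, X j : MvPolynomial σ R)
      = monomial (∑ j ∈ s.erase i, Finsupp.single j 1) 1 := (monomial_sum_one _ _).symm
  rw [hX, dysonExponent_add_single hi, coeff_monomial_mul, one_mul]

theorem dysonProd_add_single (hi : i ∈ s) (a : σ → ℕ) :
    dysonProd R s (a + Pi.single i 1) = (∏ j ∈ s.erase i, (X j - X i)) * dysonProd R s a := by
  simp only [dysonProd, Pi.add_apply, pow_add, prod_mul_distrib]
  rw [mul_comm, prod_eq_single_of_mem i hi fun l _ hl ↦ by rw [Pi.single_eq_of_ne hl, pow_zero],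
    Pi.single_eq_same, pow_one]

theorem dysonProd_of_eq_zero (hi : i ∈ s) (ha : a i = 0) :
    dysonProd R s a = dysonProd R (s.erase i) a * ∏ j ∈ s.erase i, (X i - X j) ^ a j := by
  rw [dysonProd, dysonProd, ← mul_prod_erase s _ hi, ha, pow_zero, one_mul, ← prod_mul_distrib]
  refine prod_congr rfl fun j hj ↦ ?_
  rw [← mul_prod_erase (s.erase j) _ (mem_erase.2 ⟨(ne_of_mem_erase hj).symm, hi⟩), mul_pow,
    mul_comm, erase_right_comm]

theorem degreeOf_dysonProd_of_notMem (hi : i ∉ s) (a : σ → ℕ) :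
    (dysonProd R s a).degreeOf i = 0 := by
  have hX : ∀ l ∈ s, (X l : MvPolynomial σ R) ∈ supported R (s : Set σ) :=
    fun l hl ↦ Algebra.subset_adjoin (Set.mem_image_of_mem X hl)
  have hmem : dysonProd R s a ∈ supported R (s : Set σ) :=
    prod_mem fun l hl ↦ pow_mem (prod_mem fun j hj ↦
      sub_mem (hX j (mem_of_mem_erase hj)) (hX l hl)) _
  exact of_not_not fun h ↦ hi (mem_supported.1 hmem (mem_vars_iff_degreeOf_ne_zero.2 h))

-- Good's recursion: the Lagrange basis polynomials at the nodes `x_j` add up to `1`, and the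
-- `i`-th one takes the value `∏_{j ≠ i} x_j / (x_j - x_i)` at `0`.
theorem dysonProd_eq_sum_sub_single [IsDomain R] (hs : s.Nonempty) (ha : ∀ i ∈ s, a i ≠ 0) :
    dysonProd R s a = ∑ i ∈ s, (∏ j ∈ s.erase i, X j) * dysonProd R s (a - Pi.single i 1) := by
  let φ := algebraMap (MvPolynomial σ R) (FractionRing (MvPolynomial σ R))
  have hφ : Function.Injective φ := IsFractionRing.injective _ _
  have hv : Function.Injective fun i : σ ↦ φ (X i) := hφ.comp X_injective
  apply hφ
  rw [map_sum, ← mul_one (φ _), ← sum_prod_div_sub_eq_one hs hv.injOn, mul_sum]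
  refine sum_congr rfl fun i hi ↦ ?_
  have hne : ∏ j ∈ s.erase i, (φ (X j) - φ (X i)) ≠ 0 :=
    prod_ne_zero_iff.2 fun j hj ↦ sub_ne_zero.2 (hv.ne (ne_of_mem_erase hj))
  conv_lhs => rw [← sub_single_add_single (ha i hi), dysonProd_add_single hi]
  simp only [map_mul, map_prod, map_sub, prod_div_distrib]
  field_simp

theorem coeff_dysonProd [IsDomain R] (s : Finset σ) (a : σ → ℕ) :
    coeff (dysonExponent s a) (dysonProd R s a) = Nat.multinomial s a := by
  induction h : #s + ∑ i ∈ s, a i using Nat.strong_induction_on generalizing s a with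
  | _ N ih =>
  subst h
  obtain rfl | hs := s.eq_empty_or_nonempty
  · simp [dysonProd, dysonExponent]
  by_cases! hzero : ∃ i ∈ s, a i = 0
  · obtain ⟨i, hi, hai⟩ := hzero
    have hi' : i ∉ s.erase i := notMem_erase i s
    have hdeg : (dysonProd R (s.erase i) a).degreeOf i ≤ dysonExponent (s.erase i) a i :=
      (degreeOf_dysonProd_of_notMem hi' a).trans_le (Nat.zero_le _)
    have hlt : #(s.erase i) + ∑ j ∈ s.erase i, a j < #s + ∑ j ∈ s, a j := by
      simpa only [sum_erase s hai, add_lt_add_iff_right] using card_erase_lt_of_mem hi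
    have hmult : Nat.multinomial s a = Nat.multinomial (s.erase i) a := by
      conv_lhs => rw [← insert_erase hi, Nat.multinomial_insert hi', hai, Nat.choose_zero_right,
        one_mul]
    rw [dysonProd_of_eq_zero hi hai, dysonExponent_of_eq_zero hi hai,
      coeff_add_single_mul_prod_X_sub_X_pow hi' a hdeg, ih _ hlt _ _ rfl, hmult]
  · rw [dysonProd_eq_sum_sub_single hs hzero, coeff_sum, multinomial_eq_sum_sub_single hs hzero,
      Nat.cast_sum]
    refine sum_congr rfl fun i hi ↦ ?_
    have ha := sub_single_add_single (hzero i hi)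
    have hlt : #s + ∑ j ∈ s, (a - Pi.single i 1 : σ → ℕ) j < #s + ∑ j ∈ s, a j := by
      conv_rhs => rw [← ha, sum_add_single hi, ← add_assoc]
      exact Nat.lt_succ_self _
    rw [← ih _ hlt _ _ rfl, ← coeff_dysonExponent_add_single_prod_X_mul hi (a - Pi.single i 1), ha]

end Dyson

section UmbralEval

variable {σ R : Type*} [CommRing R]

theorem cast_descFactorial_succ (B m : ℕ) :
    ((B.descFactorial (m + 1) : ℕ) : R) = (B - m) * B.descFactorial m := by
  rw [← descPochhammer_eval_eq_descFactorial, descPochhammer_succ_eval,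
    descPochhammer_eval_eq_descFactorial, mul_comm]

variable [Fintype σ]

/-- The linear functional `f ↦ (f(∂) ∏_i x_i^B)|_{x = 1}`, replacing each power `x_i^m` by the
falling factorial `B (B - 1) ⋯ (B - m + 1)`. On homogeneous `f` it computes, up to factorials, the
coefficient of `∏_i x_i^B` in `f * (∑_i x_i)^N`. -/
noncomputable def umbralEval (B : ℕ) : MvPolynomial σ R →ₗ[R] R :=
  (basisMonomials σ R).constr R fun m ↦ ∏ i, (B.descFactorial (m i) : R)

theorem umbralEval_monomial (B : ℕ) (m : σ →₀ ℕ) (c : R) :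
    umbralEval B (monomial m c) = c * ∏ i, (B.descFactorial (m i) : R) := by
  have h : monomial m c = c • basisMonomials σ R m := by
    rw [coe_basisMonomials, smul_monomial, smul_eq_mul, mul_one]
  rw [h, map_smul, umbralEval, Module.Basis.constr_basis, smul_eq_mul]

theorem umbralEval_X_mul (B : ℕ) (i : σ) (f : MvPolynomial σ R) :
    umbralEval B (X i * f) = B * umbralEval B f - umbralEval B (X i * pderiv i f) := by
  classical
  induction f using MvPolynomial.induction_on' with
  | add p q hp hq => simp only [mul_add, map_add, hp, hq]; ring
  | monomial m c =>
    have hprod : ∏ j, (B.descFactorial ((m + Finsupp.single i 1 : σ →₀ ℕ) j) : R)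
        = (B - m i) * ∏ j, (B.descFactorial (m j) : R) := by
      have hne : ∀ j ∈ univ.erase i, (m + Finsupp.single i 1 : σ →₀ ℕ) j = m j := fun j hj ↦ by
        rw [Finsupp.add_apply, Finsupp.single_eq_of_ne (ne_of_mem_erase hj), add_zero]
      rw [← mul_prod_erase univ _ (mem_univ i), prod_congr rfl fun j hj ↦ by rw [hne j hj],
        Finsupp.add_apply, Finsupp.single_eq_same, cast_descFactorial_succ, mul_assoc,
        mul_prod_erase univ (fun j ↦ (B.descFactorial (m j) : R)) (mem_univ i)]
    rw [X_mul_pderiv_monomial, map_nsmul, mul_comm, X, monomial_mul, mul_one, umbralEval_monomial,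
      umbralEval_monomial, hprod, nsmul_eq_mul]
    ring

theorem umbralEval_succ_prod_X_mul (B : ℕ) (f : MvPolynomial σ R) :
    umbralEval (B + 1) ((∏ i, X i) * f) = (B + 1) ^ Fintype.card σ * umbralEval B f := by
  classical
  induction f using MvPolynomial.induction_on' with
  | add p q hp hq => simp only [mul_add, map_add, hp, hq]
  | monomial m c =>
    have hX : (∏ i, X i : MvPolynomial σ R) = monomial (∑ i, Finsupp.single i 1) 1 :=
      (monomial_sum_one _ _).symm
    have hm (i : σ) : (∑ j, Finsupp.single j 1 + m : σ →₀ ℕ) i = m i + 1 := by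
      simp [Finsupp.single_apply, add_comm]
    rw [hX, monomial_mul, one_mul, umbralEval_monomial, umbralEval_monomial, mul_left_comm]
    simp only [hm, Nat.succ_descFactorial_succ, Nat.cast_mul, Nat.cast_add_one, prod_mul_distrib,
      prod_const, card_univ]

theorem umbralEval_rename (B : ℕ) (e : σ ≃ σ) (f : MvPolynomial σ R) :
    umbralEval B (rename e f) = umbralEval B f := by
  induction f using MvPolynomial.induction_on' with
  | add p q hp hq => simp only [map_add, hp, hq]
  | monomial m c =>
    rw [rename_monomial, umbralEval_monomial, umbralEval_monomial, ← Equiv.prod_comp e]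
    simp only [Finsupp.mapDomain_apply e.injective]

theorem umbralEval_mul_sum_X {f : MvPolynomial σ R} {d : ℕ} (hf : f.IsHomogeneous d) (B : ℕ) :
    umbralEval B (f * ∑ i, X i) = (Fintype.card σ * B - d) * umbralEval B f := by
  rw [mul_comm, sum_mul, map_sum, sum_congr rfl fun i _ ↦ umbralEval_X_mul B i f,
    sum_sub_distrib, sum_const, card_univ, nsmul_eq_mul, ← map_sum, hf.sum_X_mul_pderiv,
    map_nsmul, nsmul_eq_mul]
  ring

theorem prod_descFactorial_eq_ite {B : ℕ} {m : σ →₀ ℕ} (hm : m.degree = Fintype.card σ * B) :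
    ∏ i, B.descFactorial (m i)
      = if m = Finsupp.equivFunOnFinite.symm (fun _ : σ ↦ B) then
          B.factorial ^ Fintype.card σ else 0 := by
  split_ifs with h
  · simp [h, Nat.descFactorial_self]
  obtain ⟨i, hi⟩ : ∃ i, B < m i := by
    by_contra! hle
    have hsum : ∑ i, m i = ∑ _i : σ, B := by
      rw [← Finsupp.degree_eq_sum, hm, sum_const, card_univ, smul_eq_mul]
    exact h (Finsupp.ext fun i ↦ (sum_eq_sum_iff_of_le fun i _ ↦ hle i).1 hsum i (mem_univ i))
  exact prod_eq_zero (mem_univ i) (Nat.descFactorial_of_lt hi)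

theorem umbralEval_of_isHomogeneous {f : MvPolynomial σ R} {B : ℕ}
    (hf : f.IsHomogeneous (Fintype.card σ * B)) :
    umbralEval B f = (B.factorial : R) ^ Fintype.card σ
      * coeff (Finsupp.equivFunOnFinite.symm fun _ : σ ↦ B) f := by
  classical
  conv_lhs => rw [f.as_sum, map_sum]
  conv_rhs => rw [f.as_sum, coeff_sum, mul_sum]
  refine sum_congr rfl fun m hm ↦ ?_
  have hdeg : m.degree = Fintype.card σ * B := by
    rw [Finsupp.degree_eq_weight_one]
    exact hf (mem_support_iff.1 hm)
  rw [umbralEval_monomial, ← Nat.cast_prod, prod_descFactorial_eq_ite hdeg, coeff_monomial]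
  split_ifs <;> simp [mul_comm]

theorem factorial_pow_mul_coeff_mul_sum_X_pow {f : MvPolynomial σ R} {d N B : ℕ}
    (hf : f.IsHomogeneous d) (hd : d + N = Fintype.card σ * B) :
    (B.factorial : R) ^ Fintype.card σ
        * coeff (Finsupp.equivFunOnFinite.symm fun _ : σ ↦ B) (f * (∑ i, X i) ^ N)
      = N.factorial * umbralEval B f := by
  induction N generalizing d f with
  | zero =>
    rw [add_zero] at hd
    subst hd
    rw [pow_zero, mul_one, Nat.factorial_zero, Nat.cast_one, one_mul,
      umbralEval_of_isHomogeneous hf]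
  | succ N ih =>
    have hf' : (f * ∑ i, X i).IsHomogeneous (d + 1) :=
      hf.mul (IsHomogeneous.sum _ _ _ fun i _ ↦ isHomogeneous_X R i)
    have hN : (Fintype.card σ * B - d : R) = N + 1 := by
      rw [← Nat.cast_mul, ← hd]
      push_cast
      ring
    rw [pow_succ', ← mul_assoc, ih hf' (by rw [← hd, add_right_comm, add_assoc]),
      umbralEval_mul_sum_X hf, hN, Nat.factorial_succ]
    push_cast
    ring

end UmbralEval

section Discriminant

theorem derivation_prod {R A M ι : Type*} [CommSemiring R] [CommSemiring A] [AddCommMonoid M]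
    [Algebra R A] [Module A M] [Module R M] [DecidableEq ι] (D : Derivation R A M)
    (s : Finset ι) (f : ι → A) :
    D (∏ i ∈ s, f i) = ∑ i ∈ s, (∏ j ∈ s.erase i, f j) • D (f i) := by
  induction s using Finset.induction_on with
  | empty => simp
  | insert a s ha ih =>
    rw [prod_insert ha, sum_insert ha, erase_insert ha, D.leibniz, ih, smul_sum, add_comm]
    congr 1
    refine sum_congr rfl fun i hi ↦ ?_
    rw [erase_insert_of_ne (ne_of_mem_of_not_mem hi ha).symm,
      prod_insert (fun h ↦ ha (mem_of_mem_erase h)), mul_smul]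

theorem rename_swap_prod_X {σ R : Type*} [CommSemiring R] [DecidableEq σ] {i j : σ}
    {S : Finset σ} (h : i ∈ S ↔ j ∈ S) :
    rename (Equiv.swap i j) (∏ l ∈ S, X l : MvPolynomial σ R) = ∏ l ∈ S, X l := by
  rw [map_prod]
  refine prod_equiv (Equiv.swap i j) (fun l ↦ ?_) fun l _ ↦ rename_X _ l
  rw [Equiv.swap_apply_def]
  split_ifs with hi hj
  · rw [hi, h]
  · rw [hj, h]
  · rfl

variable {σ : Type*} (R : Type*) [CommRing R] [Fintype σ]

variable (σ) in
/-- The product `∏_{i ≠ j} (x_i - x_j)` over all ordered pairs, the discriminant up to sign. -/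
noncomputable def diffProd : MvPolynomial σ R :=
  ∏ p ∈ (univ : Finset σ).offDiag, (X p.1 - X p.2)

theorem rename_diffProd (e : σ ≃ σ) : rename e (diffProd σ R) = diffProd σ R := by
  rw [diffProd, map_prod]
  exact prod_equiv (e.prodCongr e) (by simp) (by simp)

theorem isHomogeneous_diffProd_pow (k : ℕ) :
    (diffProd σ R ^ k).IsHomogeneous (Fintype.card σ * ((Fintype.card σ - 1) * k)) := by
  have h : (diffProd σ R).IsHomogeneous (∑ _p ∈ (univ : Finset σ).offDiag, 1) :=
    IsHomogeneous.prod _ _ _ fun _ _ ↦ (isHomogeneous_X R _).sub (isHomogeneous_X R _)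
  rw [← card_eq_sum_ones, offDiag_card, card_univ, ← Nat.mul_sub_one] at h
  simpa only [mul_assoc] using h.pow k

variable [DecidableEq σ]

/-- The product `diffProd` with the factor `x_i - x_j` left out. -/
noncomputable def diffProdErase (i j : σ) : MvPolynomial σ R :=
  ∏ p ∈ (univ : Finset σ).offDiag.erase (i, j), (X p.1 - X p.2)

/-- The polynomial `k * diffProd ^ k / (x_i - x_j)`, written without division. -/
noncomputable def diffPowQuot (k : ℕ) (i j : σ) : MvPolynomial σ R :=
  k * diffProd σ R ^ (k - 1) * diffProdErase R i j

variable {i j : σ}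

theorem X_sub_X_mul_diffProdErase (h : i ≠ j) :
    (X i - X j) * diffProdErase R i j = diffProd σ R :=
  mul_prod_erase univ.offDiag (fun p ↦ (X p.1 - X p.2 : MvPolynomial σ R))
    (a := (i, j)) (by simpa using h)

theorem diffProdErase_swap (h : i ≠ j) : diffProdErase R j i = -diffProdErase R i j := by
  have hij : (i, j) ∈ (univ : Finset σ).offDiag.erase (j, i) := by simp [h]
  have hji : (j, i) ∈ (univ : Finset σ).offDiag.erase (i, j) := by simp [h, h.symm]
  rw [diffProdErase, diffProdErase, ← mul_prod_erase _ _ hij, ← mul_prod_erase _ _ hji,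
    erase_right_comm]
  ring

theorem rename_diffProdErase (e : σ ≃ σ) (i j : σ) :
    rename e (diffProdErase R i j) = diffProdErase R (e i) (e j) := by
  rw [diffProdErase, map_prod]
  exact prod_equiv (e.prodCongr e) (by simp [Prod.ext_iff]) (by simp)

theorem diffProd_pow_eq_dysonProd (k : ℕ) : diffProd σ R ^ k = dysonProd R univ fun _ ↦ k := by
  rw [dysonProd, prod_pow, diffProd,
    prod_finset_product_right univ.offDiag univ univ.erase (by simp [and_comm])]

theorem diffProd_pow_eq_prod_prod_erase (k : ℕ) :
    diffProd σ R ^ k = ∏ j : σ, ∏ i ∈ univ.erase j, (X j - X i) ^ k := by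
  rw [diffProd, prod_finset_product univ.offDiag univ univ.erase (by simp [eq_comm])]
  simp only [prod_pow]

theorem pderiv_diffProd (i : σ) :
    pderiv i (diffProd σ R) = 2 * ∑ j ∈ univ.erase i, diffProdErase R i j := by
  have hfst : ∑ p ∈ (univ : Finset σ).offDiag with p.1 = i, diffProdErase R p.1 p.2
      = ∑ j ∈ univ.erase i, diffProdErase R i j := by
    rw [sum_finset_product _ {i} univ.erase (by simp [eq_comm, and_comm]), sum_singleton]
  have hsnd : ∑ p ∈ (univ : Finset σ).offDiag with p.2 = i, diffProdErase R p.1 p.2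
      = -∑ j ∈ univ.erase i, diffProdErase R i j := by
    rw [sum_finset_product_right _ {i} univ.erase (by simp [and_comm]), sum_singleton,
      ← sum_neg_distrib]
    exact sum_congr rfl fun j hj ↦ diffProdErase_swap R (ne_of_mem_erase hj).symm
  have hterm (p : σ × σ) : diffProdErase R p.1 p.2 * pderiv i (X p.1 - X p.2 : MvPolynomial σ R)
      = (if p.1 = i then diffProdErase R p.1 p.2 else 0)
        - if p.2 = i then diffProdErase R p.1 p.2 else 0 := by
    simp only [map_sub, pderiv_X, Pi.single_apply, mul_sub, mul_ite, mul_one, mul_zero, eq_comm]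
  calc pderiv i (diffProd σ R)
      = ∑ p ∈ (univ : Finset σ).offDiag,
          diffProdErase R p.1 p.2 * pderiv i (X p.1 - X p.2) := derivation_prod _ _ _
    _ = 2 * ∑ j ∈ univ.erase i, diffProdErase R i j := by
        simp only [hterm, sum_sub_distrib, ← sum_filter]
        rw [hfst, hsnd, sub_neg_eq_add, two_mul]

theorem X_sub_X_mul_diffPowQuot (k : ℕ) (h : i ≠ j) :
    (X i - X j) * diffPowQuot R k i j = (k : MvPolynomial σ R) * diffProd σ R ^ k := by
  obtain _ | k := k
  · simp [diffPowQuot]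
  · rw [diffPowQuot, Nat.add_sub_cancel, pow_succ, ← X_sub_X_mul_diffProdErase R h]
    ring

theorem rename_swap_diffPowQuot (k : ℕ) (h : i ≠ j) :
    rename (Equiv.swap i j) (diffPowQuot R k i j) = -diffPowQuot R k i j := by
  rw [diffPowQuot, map_mul, map_mul, map_pow, map_natCast, rename_diffProd, rename_diffProdErase,
    Equiv.swap_apply_left, Equiv.swap_apply_right, diffProdErase_swap R h, mul_neg]

theorem pderiv_diffProd_pow (k : ℕ) (i : σ) :
    pderiv i (diffProd σ R ^ k) = 2 * ∑ j ∈ univ.erase i, diffPowQuot R k i j := by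
  simp only [diffPowQuot, ← mul_sum]
  rw [pderiv_pow, pderiv_diffProd]
  ring

end Discriminant

section Aomoto

variable {σ R : Type*} [CommRing R] [Fintype σ] [DecidableEq σ] (B k : ℕ)

-- `diffPowQuot` is antisymmetric and `umbralEval` symmetric under `x_i ↔ x_j`, so only the
-- antisymmetric part of `f` contributes.
theorem two_mul_umbralEval_mul_diffPowQuot {i j : σ} (h : i ≠ j) {f g : MvPolynomial σ R}
    (hfg : f - rename (Equiv.swap i j) f = (X i - X j) * g) :
    2 * umbralEval B (f * diffPowQuot R k i j) = (k : R) * umbralEval B (g * diffProd σ R ^ k) := by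
  have hswap : umbralEval B (rename (Equiv.swap i j) f * diffPowQuot R k i j)
      = -umbralEval B (f * diffPowQuot R k i j) := by
    rw [← umbralEval_rename B (Equiv.swap i j) (f * diffPowQuot R k i j), map_mul (rename _),
      rename_swap_diffPowQuot R k h, mul_neg, map_neg, neg_neg]
  have hquot : (f - rename (Equiv.swap i j) f) * diffPowQuot R k i j
      = k • (g * diffProd σ R ^ k) := by
    rw [hfg, nsmul_eq_mul, mul_left_comm, ← X_sub_X_mul_diffPowQuot R k h]
    ring
  rw [← nsmul_eq_mul, ← map_nsmul, ← hquot, sub_mul, map_sub, hswap, sub_neg_eq_add, two_mul]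

theorem umbralEval_X_mul_mul_diffProd_pow (i : σ) (f : MvPolynomial σ R) :
    umbralEval B (X i * f * diffProd σ R ^ k)
      = (B : R) * umbralEval B (f * diffProd σ R ^ k)
        - umbralEval B (X i * pderiv i f * diffProd σ R ^ k)
        - ∑ j ∈ univ.erase i, 2 * umbralEval B (X i * f * diffPowQuot R k i j) := by
  have hpderiv : X i * pderiv i (f * diffProd σ R ^ k)
      = X i * pderiv i f * diffProd σ R ^ k
        + 2 • ∑ j ∈ univ.erase i, X i * f * diffPowQuot R k i j := by
    rw [pderiv_mul, pderiv_diffProd_pow, ← mul_sum, nsmul_eq_mul, Nat.cast_ofNat]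
    ring
  rw [mul_assoc, umbralEval_X_mul, hpderiv, map_add, map_nsmul, map_sum, ← mul_sum, nsmul_eq_mul,
    Nat.cast_ofNat, sub_add_eq_sub_sub]

theorem umbralEval_prod_X_insert {i : σ} {S : Finset σ} (hi : i ∉ S) :
    umbralEval B ((∏ l ∈ insert i S, X l) * diffProd σ R ^ k)
      = ((B : R) - k * #(insert i S)ᶜ) * umbralEval B ((∏ l ∈ S, X l) * diffProd σ R ^ k) := by
  have hpderiv : pderiv i (∏ l ∈ S, X l : MvPolynomial σ R) = 0 := by
    rw [derivation_prod]
    refine sum_eq_zero fun l hl ↦ ?_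
    rw [pderiv_X_of_ne (ne_of_mem_of_not_mem hl hi), smul_zero]
  have hmem (j : σ) (hji : j ≠ i) (hj : j ∈ S) :
      2 * umbralEval B (X i * (∏ l ∈ S, X l) * diffPowQuot R k i j) = 0 := by
    rw [two_mul_umbralEval_mul_diffPowQuot B k hji.symm (g := 0), zero_mul, map_zero, mul_zero]
    rw [← prod_insert hi, rename_swap_prod_X (by simp [hj]), sub_self, mul_zero]
  have hnotMem (j : σ) (hji : j ≠ i) (hj : j ∉ S) :
      2 * umbralEval B (X i * (∏ l ∈ S, X l) * diffPowQuot R k i j)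
        = (k : R) * umbralEval B ((∏ l ∈ S, X l) * diffProd σ R ^ k) := by
    refine two_mul_umbralEval_mul_diffPowQuot B k hji.symm ?_
    rw [map_mul, rename_X, Equiv.swap_apply_left, rename_swap_prod_X (by simp [hi, hj]), sub_mul]
  have hcompl : (univ.erase i).filter (· ∉ S) = (insert i S)ᶜ := by ext; simp
  have hsum : ∑ j ∈ univ.erase i, 2 * umbralEval B (X i * (∏ l ∈ S, X l) * diffPowQuot R k i j)
      = #(insert i S)ᶜ * ((k : R) * umbralEval B ((∏ l ∈ S, X l) * diffProd σ R ^ k)) := by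
    rw [← sum_filter_add_sum_filter_not _ (· ∈ S), sum_eq_zero, zero_add, hcompl,
      sum_congr rfl, sum_const, nsmul_eq_mul]
    · intro j hj
      rw [← hcompl, mem_filter, mem_erase] at hj
      exact hnotMem j hj.1.1 hj.2
    · intro j hj
      rw [mem_filter, mem_erase] at hj
      exact hmem j hj.1.1 hj.2
  rw [prod_insert hi, umbralEval_X_mul_mul_diffProd_pow, hpderiv, mul_zero, zero_mul, map_zero,
    sub_zero, hsum]
  ring

end Aomoto

section Evaluation

theorem prod_factorial_mul_multinomial {σ : Type*} (s : Finset σ) (k : ℕ) :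
    (∏ l ∈ range #s, (k * l).factorial * k.factorial) * Nat.multinomial s (fun _ ↦ k)
      = ∏ l ∈ range #s, (k * (l + 1)).factorial := by
  have hspec := Nat.multinomial_spec s fun _ ↦ k
  rw [prod_const, sum_const, smul_eq_mul] at hspec
  rw [prod_mul_distrib, prod_const, card_range, mul_assoc, hspec, mul_comm #s,
    ← prod_range_succ fun l ↦ (k * l).factorial, prod_range_succ', mul_zero, Nat.factorial_zero,
    mul_one]

variable {σ R : Type*} [CommRing R] [Fintype σ]

theorem umbralEval_prod_X (b k : ℕ) (S : Finset σ) :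
    umbralEval ((Fintype.card σ - 1) * k + b) ((∏ l ∈ S, X l) * diffProd σ R ^ k)
      = (∏ l ∈ range #S, (b + k * l : R))
        * umbralEval ((Fintype.card σ - 1) * k + b) (diffProd σ R ^ k) := by
  classical
  induction S using Finset.induction_on with
  | empty => simp
  | insert i S hi ih =>
    have hcard : Fintype.card σ - 1 = #(insert i S)ᶜ + #S := by
      rw [← card_add_card_compl (insert i S), card_insert_of_notMem hi]
      lia
    rw [umbralEval_prod_X_insert _ _ hi, ih, card_insert_of_notMem hi, prod_range_succ, hcard]
    push_cast
    ring

theorem umbralEval_X_sq (B k : ℕ) (i : σ) :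
    umbralEval B (X i ^ 2 * diffProd σ R ^ k)
      = ((B : R) - 1 - 2 * k * (Fintype.card σ - 1)) * umbralEval B (X i * diffProd σ R ^ k) := by
  classical
  have hterm : ∀ j ∈ univ.erase i, 2 * umbralEval B (X i * X i * diffPowQuot R k i j)
      = 2 * (k : R) * umbralEval B (X i * diffProd σ R ^ k) := by
    intro j hj
    have hsymm : umbralEval B (X j * diffProd σ R ^ k) = umbralEval B (X i * diffProd σ R ^ k) := by
      rw [← umbralEval_rename B (Equiv.swap i j), map_mul, map_pow, rename_diffProd, rename_X,
        Equiv.swap_apply_right]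
    rw [two_mul_umbralEval_mul_diffPowQuot B k (ne_of_mem_erase hj).symm (g := X i + X j), add_mul,
      map_add, hsymm]
    · ring
    · rw [map_mul, rename_X, Equiv.swap_apply_left]
      ring
  rw [pow_two, umbralEval_X_mul_mul_diffProd_pow, pderiv_X_self, mul_one, sum_congr rfl hterm,
    sum_const, card_erase_of_mem (mem_univ i), card_univ, nsmul_eq_mul,
    Nat.cast_sub (Fintype.card_pos_iff.2 ⟨i⟩)]
  push_cast
  ring

variable [IsDomain R]

theorem umbralEval_diffProd_pow (k : ℕ) :
    umbralEval ((Fintype.card σ - 1) * k) (diffProd σ R ^ k)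
      = (((Fintype.card σ - 1) * k).factorial : R) ^ Fintype.card σ
        * Nat.multinomial (univ : Finset σ) (fun _ ↦ k) := by
  classical
  rw [umbralEval_of_isHomogeneous (isHomogeneous_diffProd_pow R k), ← dysonExponent_univ_const,
    diffProd_pow_eq_dysonProd, coeff_dysonProd]

theorem prod_factorial_mul_umbralEval_diffProd_pow (b k : ℕ) :
    (∏ l ∈ range (Fintype.card σ), (((b + k * l).factorial * k.factorial : ℕ) : R))
        * umbralEval ((Fintype.card σ - 1) * k + b) (diffProd σ R ^ k)
      = (((Fintype.card σ - 1) * k + b).factorial : R) ^ Fintype.card σ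
        * ∏ l ∈ range (Fintype.card σ), ((k * (l + 1)).factorial : R) := by
  induction b with
  | zero =>
    have h := congrArg (Nat.cast (R := R)) (prod_factorial_mul_multinomial (univ : Finset σ) k)
    push_cast [card_univ] at h
    simp only [zero_add, add_zero, umbralEval_diffProd_pow]
    push_cast
    rw [mul_left_comm, h]
  | succ b ih =>
    have hrec := umbralEval_succ_prod_X_mul ((Fintype.card σ - 1) * k + b) (diffProd σ R ^ k)
    rw [add_assoc, umbralEval_prod_X, card_univ] at hrec
    have hfac (l : ℕ) : (((b + 1 + k * l).factorial * k.factorial : ℕ) : R)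
        = ((b + k * l).factorial * k.factorial : ℕ) * ((b + 1 : ℕ) + k * l) := by
      rw [add_right_comm, Nat.factorial_succ]
      push_cast
      ring
    rw [prod_congr rfl fun l _ ↦ hfac l, prod_mul_distrib, mul_assoc, hrec, mul_left_comm, ih,
      ← add_assoc, Nat.factorial_succ]
    push_cast
    rw [mul_pow, mul_assoc]

end Evaluation

end Morris

open Morris in
theorem morris_second_leading_coefficient_general {K σ : Type*} [Field K] [CharZero K] [Fintype σ]
    [DecidableEq σ] (i : σ) (b k : ℕ) (hb : 2 ≤ Fintype.card σ * b) :
    coeff (Finsupp.equivFunOnFinite.symm fun _ : σ ↦ (Fintype.card σ - 1) * k + b)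
      (X i ^ 2 * (∑ l, X l) ^ (Fintype.card σ * b - 2) *
        ∏ j, ∏ l ∈ univ.erase j, (X j - X l : MvPolynomial σ K) ^ k)
      = -(b : K) * ((Fintype.card σ : K) * k - k - b + 1) *
          ((Fintype.card σ * b - 2).factorial : K) *
          ∏ l ∈ range (Fintype.card σ),
            ((k * (l + 1)).factorial : K) / ((b + k * l).factorial * k.factorial) := by
  have hdeg : 2 + Fintype.card σ * ((Fintype.card σ - 1) * k) + (Fintype.card σ * b - 2)
      = Fintype.card σ * ((Fintype.card σ - 1) * k + b) := by
    rw [mul_add]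
    lia
  have hcoeff := factorial_pow_mul_coeff_mul_sum_X_pow
    (((isHomogeneous_X K i).pow 2).mul (isHomogeneous_diffProd_pow K k)) hdeg
  have hX := umbralEval_prod_X (R := K) b k {i}
  rw [prod_singleton, card_singleton, prod_range_one, Nat.cast_zero, mul_zero, add_zero] at hX
  have hden : ∏ l ∈ range (Fintype.card σ), (((b + k * l).factorial * k.factorial : ℕ) : K) ≠ 0 :=
    prod_ne_zero_iff.2 fun l _ ↦
      Nat.cast_ne_zero.2 (mul_ne_zero (Nat.factorial_ne_zero _) (Nat.factorial_ne_zero _))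
  have heval := eq_div_of_mul_eq hden
    ((mul_comm _ _).trans (prod_factorial_mul_umbralEval_diffProd_pow (σ := σ) (R := K) b k))
  rw [← diffProd_pow_eq_prod_prod_erase, mul_right_comm]
  refine mul_left_cancel₀ (pow_ne_zero (Fintype.card σ) (Nat.cast_ne_zero.2
    (Nat.factorial_ne_zero ((Fintype.card σ - 1) * k + b)))) ?_
  rw [hcoeff, umbralEval_X_sq, hX, heval, mul_div_assoc, ← prod_div_distrib]
  push_cast [Nat.cast_sub (Fintype.card_pos_iff.2 ⟨i⟩)]
  ring

/-- **Second leading coefficient identity for the Morris constant term** (Corollary 6.4,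
second identity).  For `n ≥ 2` and `nb ≥ 2`,
`CT_x x_1^2 (x_1+⋯+x_n)^(nb-2) ∏_l x_l^(-b) ∏_{1≤i≠j≤n}(1-x_i/x_j)^k
  = -b(nk-k-b+1)(nb-2)! ∏_{l=0}^{n-1} (k(l+1))!/((b+kl)! k!)`.
Clearing denominators, the constant term equals the coefficient of
`∏_l x_l^((n-1)k + b)` in `x_1^2 (x_1+⋯+x_n)^(nb-2) · ∏_{i≠j}(x_j-x_i)^k`. -/
theorem morris_second_leading_coefficient (n b k : ℕ) (hn : 2 ≤ n) (hnb : 2 ≤ n * b) :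
    MvPolynomial.coeff
      (Finsupp.equivFunOnFinite.symm (fun _ : Fin n => (n - 1) * k + b))
      ((X (⟨0, by omega⟩ : Fin n)) ^ 2 * (∑ l : Fin n, X l) ^ (n * b - 2) *
        ∏ j : Fin n, ∏ i ∈ Finset.univ.erase j,
          (X j - X i : MvPolynomial (Fin n) ℚ) ^ k)
      = -(b : ℚ) * ((n : ℚ) * k - k - b + 1) * ((n * b - 2).factorial : ℚ) *
          ∏ l ∈ Finset.range n,
            ((k * (l + 1)).factorial : ℚ) / ((b + k * l).factorial * k.factorial) := by
  simpa using morris_second_leading_coefficient_general (K := ℚ) (⟨0, by omega⟩ : Fin n) b k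
    (by simpa using hnb)
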